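/- arXiv:0902.1591 — 3 statements merged into one kernel-verified Lean document; each statement's English description precedes it below -/
import Mathlib

section
/- Let S1, S2, U0, U1, U2, Y1, Y2, K be finitely-valued random variables on a common probability space such that K = f(S1) = g(S2) almost surely for deterministic maps f, g. Then I(U0,U1,S1;Y1) + I(U2,S2;Y2|U0) − I(U1,S1;U2,S2|U0) ≤ I(K,U0,U1,S1;Y1) + I(U2,S2;Y2|K,U0) − I(U1,S1;U2,S2|K,U0). -/
/-!
The entropy `H p X` is the expectation of `-log (dist p X (X ω))`, so it can only grow when `X` is
replaced by a variable that determines it almost surely (`CSBC.H_le_of_determines`): the atoms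
shrink. Two variables that determine each other therefore have equal entropy.

Expanding both sides in entropies, `K` can be dropped from every joint entropy that contains `S1`
or `S2`, and the `H(U2, S2, U0)` and `H(U0)` terms cancel. The difference of the two sides is
`H(Y2, K, U0) - H(Y2, U0)`, which is nonnegative by the same monotonicity.
-/

open Real Filter

attribute [local instance] Classical.propDecidable

noncomputable section

namespace CSBC

/-- A probability mass function on a finite type. -/
def IsPMF {Ω : Type*} [Fintype Ω] (p : Ω → ℝ) : Prop :=
  (∀ ω, 0 ≤ p ω) ∧ ∑ ω, p ω = 1

/-- Distribution (pushforward pmf) of a random variable `X` under pmf `p`. -/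
def dist {Ω A : Type*} [Fintype Ω] [Fintype A] (p : Ω → ℝ) (X : Ω → A) : A → ℝ :=
  fun a => ∑ ω, if X ω = a then p ω else 0

/-- Shannon entropy of the random variable `X` under the pmf `p`. -/
def H {Ω A : Type*} [Fintype Ω] [Fintype A] (p : Ω → ℝ) (X : Ω → A) : ℝ :=
  -∑ a, dist p X a * Real.log (dist p X a)

/-- Mutual information `I(X;Y)` under the pmf `p`. -/
def I2 {Ω A B : Type*} [Fintype Ω] [Fintype A] [Fintype B]
    (p : Ω → ℝ) (X : Ω → A) (Y : Ω → B) : ℝ :=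
  H p X + H p Y - H p (fun ω => (X ω, Y ω))

/-- Conditional mutual information `I(X;Y|Z)` under the pmf `p`. -/
def CI {Ω A B C : Type*} [Fintype Ω] [Fintype A] [Fintype B] [Fintype C]
    (p : Ω → ℝ) (X : Ω → A) (Y : Ω → B) (Z : Ω → C) : ℝ :=
  H p (fun ω => (X ω, Z ω)) + H p (fun ω => (Y ω, Z ω))
    - H p (fun ω => (X ω, Y ω, Z ω)) - H p Z

end CSBC

open CSBC

namespace CSBC

theorem H_eq_expectation {Ω A : Type*} [Fintype Ω] [Fintype A] (p : Ω → ℝ) (X : Ω → A) :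
    H p X = -∑ ω, p ω * Real.log (dist p X (X ω)) := by
  have h : ∀ a, dist p X a * Real.log (dist p X a)
      = ∑ ω, if X ω = a then p ω * Real.log (dist p X a) else 0 := by
    intro a
    conv_lhs => rw [dist, Finset.sum_mul]
    exact Finset.sum_congr rfl fun ω _ => by split_ifs <;> simp [dist]
  simp only [H, h]
  rw [Finset.sum_comm]
  simp

/-- Entropy is monotone: the hypothesis says that `X` is almost surely a function of `Z`. -/
theorem H_le_of_determines {Ω A B : Type*} [Fintype Ω] [Fintype A] [Fintype B]
    {p : Ω → ℝ} (hp : IsPMF p) (X : Ω → A) (Z : Ω → B)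
    (h : ∀ ω ω', p ω ≠ 0 → p ω' ≠ 0 → Z ω = Z ω' → X ω = X ω') :
    H p X ≤ H p Z := by
  rw [H_eq_expectation, H_eq_expectation]
  refine neg_le_neg (Finset.sum_le_sum fun ω _ => ?_)
  by_cases h0 : p ω = 0
  · simp [h0]
  have hpos : 0 < p ω := lt_of_le_of_ne (hp.1 ω) (Ne.symm h0)
  refine mul_le_mul_of_nonneg_left (Real.log_le_log ?_ ?_) hpos.le
  · have := Finset.single_le_sum (f := fun ω' => if Z ω' = Z ω then p ω' else 0)
      (fun i _ => by split_ifs; exacts [hp.1 i, le_rfl]) (Finset.mem_univ ω)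
    simp only [if_true] at this
    exact hpos.trans_le this
  · refine Finset.sum_le_sum fun ω' _ => ?_
    by_cases h1 : p ω' = 0
    · simp [h1]
    by_cases hZ : Z ω' = Z ω
    · simp [hZ, h ω' ω h1 h0 hZ]
    · rw [if_neg hZ]
      split_ifs
      exacts [hp.1 ω', le_rfl]

theorem H_eq_of_determines {Ω A B : Type*} [Fintype Ω] [Fintype A] [Fintype B]
    {p : Ω → ℝ} (hp : IsPMF p) (X : Ω → A) (Z : Ω → B)
    (h : ∀ ω ω', p ω ≠ 0 → p ω' ≠ 0 → (Z ω = Z ω' ↔ X ω = X ω')) :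
    H p X = H p Z :=
  le_antisymm (H_le_of_determines hp X Z fun ω ω' a b => (h ω ω' a b).1)
    (H_le_of_determines hp Z X fun ω ω' a b => (h ω ω' a b).2)

end CSBC

/-- With `K = f(S1) = g(S2)` almost surely, the stated
mutual-information inequality holds. -/
theorem conditioning_on_common_part_3
    {Ω A1 A2 B0 B1 B2 C1 C2 Kt : Type*}
    [Fintype Ω] [Fintype A1] [Fintype A2] [Fintype B0] [Fintype B1] [Fintype B2]
    [Fintype C1] [Fintype C2] [Fintype Kt]
    (p : Ω → ℝ) (hp : IsPMF p)
    (S1 : Ω → A1) (S2 : Ω → A2) (U0 : Ω → B0) (U1 : Ω → B1) (U2 : Ω → B2)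
    (Y1 : Ω → C1) (Y2 : Ω → C2) (K : Ω → Kt)
    (f : A1 → Kt) (g : A2 → Kt)
    (hf : ∀ ω, p ω ≠ 0 → K ω = f (S1 ω))
    (hg : ∀ ω, p ω ≠ 0 → K ω = g (S2 ω)) :
    I2 p (fun ω => (U0 ω, U1 ω, S1 ω)) Y1
      + CI p (fun ω => (U2 ω, S2 ω)) Y2 U0
      - CI p (fun ω => (U1 ω, S1 ω)) (fun ω => (U2 ω, S2 ω)) U0
    ≤ I2 p (fun ω => (K ω, U0 ω, U1 ω, S1 ω)) Y1
      + CI p (fun ω => (U2 ω, S2 ω)) Y2 (fun ω => (K ω, U0 ω))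
      - CI p (fun ω => (U1 ω, S1 ω)) (fun ω => (U2 ω, S2 ω)) (fun ω => (K ω, U0 ω)) := by
  have hS1 : ∀ ω ω', p ω ≠ 0 → p ω' ≠ 0 → S1 ω = S1 ω' → K ω = K ω' := by
    intro ω ω' h h' e
    rw [hf ω h, hf ω' h', e]
  have hS2 : ∀ ω ω', p ω ≠ 0 → p ω' ≠ 0 → S2 ω = S2 ω' → K ω = K ω' := by
    intro ω ω' h h' e
    rw [hg ω h, hg ω' h', e]
  have e1 : H p (fun ω => (K ω, U0 ω, U1 ω, S1 ω)) = H p (fun ω => (U0 ω, U1 ω, S1 ω)) := by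
    refine H_eq_of_determines hp _ _ fun ω ω' h h' => ?_
    have := hS1 ω ω' h h'
    simp only [Prod.mk.injEq]
    tauto
  have e2 : H p (fun ω => ((K ω, U0 ω, U1 ω, S1 ω), Y1 ω))
      = H p (fun ω => ((U0 ω, U1 ω, S1 ω), Y1 ω)) := by
    refine H_eq_of_determines hp _ _ fun ω ω' h h' => ?_
    have := hS1 ω ω' h h'
    simp only [Prod.mk.injEq]
    tauto
  have e3 : H p (fun ω => ((U2 ω, S2 ω), Y2 ω, K ω, U0 ω))
      = H p (fun ω => ((U2 ω, S2 ω), Y2 ω, U0 ω)) := by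
    refine H_eq_of_determines hp _ _ fun ω ω' h h' => ?_
    have := hS2 ω ω' h h'
    simp only [Prod.mk.injEq]
    tauto
  have e4 : H p (fun ω => ((U1 ω, S1 ω), K ω, U0 ω)) = H p (fun ω => ((U1 ω, S1 ω), U0 ω)) := by
    refine H_eq_of_determines hp _ _ fun ω ω' h h' => ?_
    have := hS1 ω ω' h h'
    simp only [Prod.mk.injEq]
    tauto
  have e5 : H p (fun ω => ((U1 ω, S1 ω), (U2 ω, S2 ω), K ω, U0 ω))
      = H p (fun ω => ((U1 ω, S1 ω), (U2 ω, S2 ω), U0 ω)) := by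
    refine H_eq_of_determines hp _ _ fun ω ω' h h' => ?_
    have := hS1 ω ω' h h'
    simp only [Prod.mk.injEq]
    tauto
  have e6 : H p (fun ω => (Y2 ω, U0 ω)) ≤ H p (fun ω => (Y2 ω, K ω, U0 ω)) := by
    refine H_le_of_determines hp _ _ fun ω ω' _ _ => ?_
    simp only [Prod.mk.injEq]
    tauto
  simp only [I2, CI, e1, e2, e3, e4, e5]
  linarith
end
end

section
/- Let S1, S2, U0, U1, U2, Y1, Y2, K be finitely-valued random variables on a common probability space such that K = f(S1) = g(S2) almost surely for deterministic maps f, g, and set Ũ0 := (U0, K). Then the following identities hold: (i) I(Ũ0,U1;S2|S1) = I(U0,U1;S2|S1); (ii) I(Ũ0,U2;S1|S2) = I(U0,U2;S1|S2); (iii) I(Ũ0,U1,S1;Y1) = I(K,U0,U1,S1;Y1); (iv) I(U2,S2;Y2|Ũ0) = I(U2,S2;Y2|K,U0); (v) I(U1,S1;Y1|Ũ0) = I(U1,S1;Y1|K,U0); (vi) I(U1,S1;U2,S2|Ũ0) = I(U1,S1;U2,S2|K,U0); (vii) I(S1,S2;Ũ0) = I(S1,S2;K,U0). Consequently, the five inequalities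 of Theorem 2 (Minero–Kim form) evaluated with auxiliary triple (Ũ0,U1,U2) coincide term-by-term with the five inequalities of Han and Costa's theorem evaluated with (U0,U1,U2) and common variable K. -/
/-!
The entropy of a variable depends only on the partition of the support of `p` into its level
sets (`entropy_congr_of_partition`), because `H(X) = -E[log P_X(X)]`. Every mutual information
here is a signed sum of entropies of tuples, so each identity reduces to comparing partitions
term by term (`I2_congr_of_partition`, `CI_congr_of_partition`). Reordering or regrouping the
entries of a tuple leaves the partition unchanged, and adjoining `K` to a tuple that contains `S1`
or `S2` does so as well, since `K = f(S1) = g(S2)` on the support.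

The first, second and fifth inequalities also need
`I(U0,K,U1,S1;Y1) = I(U0,U1,S1;Y1)` and its counterpart for receiver 2, which hold for the same
reason. After rewriting with all these identities the two systems of inequalities are identical.
-/

open Real Filter

attribute [local instance] Classical.propDecidable

noncomputable section

open CSBC
namespace CSBC

/-- The five inequalities of Theorem 2 (Minero–Kim form) for sources `S1, S2`,
auxiliary triple `V0, V1, V2` and channel outputs `Y1, Y2`. -/
def MKfive {Ω A1 A2 B0 B1 B2 C1 C2 : Type*} [Fintype Ω] [Fintype A1] [Fintype A2]
    [Fintype B0] [Fintype B1] [Fintype B2] [Fintype C1] [Fintype C2]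
    (p : Ω → ℝ) (S1 : Ω → A1) (S2 : Ω → A2) (V0 : Ω → B0) (V1 : Ω → B1) (V2 : Ω → B2)
    (Y1 : Ω → C1) (Y2 : Ω → C2) : Prop :=
  H p S1 < I2 p (fun ω => (V0 ω, V1 ω, S1 ω)) Y1
      - CI p (fun ω => (V0 ω, V1 ω)) S2 S1 ∧
  H p S2 < I2 p (fun ω => (V0 ω, V2 ω, S2 ω)) Y2
      - CI p (fun ω => (V0 ω, V2 ω)) S1 S2 ∧
  H p (fun ω => (S1 ω, S2 ω)) < I2 p (fun ω => (V0 ω, V1 ω, S1 ω)) Y1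
      + CI p (fun ω => (V2 ω, S2 ω)) Y2 V0
      - CI p (fun ω => (V1 ω, S1 ω)) (fun ω => (V2 ω, S2 ω)) V0 ∧
  H p (fun ω => (S1 ω, S2 ω)) < CI p (fun ω => (V1 ω, S1 ω)) Y1 V0
      + I2 p (fun ω => (V0 ω, V2 ω, S2 ω)) Y2
      - CI p (fun ω => (V1 ω, S1 ω)) (fun ω => (V2 ω, S2 ω)) V0 ∧
  H p (fun ω => (S1 ω, S2 ω)) < I2 p (fun ω => (V0 ω, V1 ω, S1 ω)) Y1
      + I2 p (fun ω => (V0 ω, V2 ω, S2 ω)) Y2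
      - CI p (fun ω => (V1 ω, S1 ω)) (fun ω => (V2 ω, S2 ω)) V0
      - I2 p (fun ω => (S1 ω, S2 ω)) V0

end CSBC
namespace CSBC

/-- The five inequalities of Han and Costa's theorem for sources `S1, S2`,
auxiliary triple `U0, U1, U2`, common variable `K`, and channel outputs `Y1, Y2`. -/
def HCfive {Ω A1 A2 B0 B1 B2 C1 C2 Kt : Type*} [Fintype Ω] [Fintype A1] [Fintype A2]
    [Fintype B0] [Fintype B1] [Fintype B2] [Fintype C1] [Fintype C2] [Fintype Kt]
    (p : Ω → ℝ) (S1 : Ω → A1) (S2 : Ω → A2) (U0 : Ω → B0) (U1 : Ω → B1) (U2 : Ω → B2)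
    (Y1 : Ω → C1) (Y2 : Ω → C2) (K : Ω → Kt) : Prop :=
  H p S1 < I2 p (fun ω => (U0 ω, U1 ω, S1 ω)) Y1
      - CI p (fun ω => (U0 ω, U1 ω)) S2 S1 ∧
  H p S2 < I2 p (fun ω => (U0 ω, U2 ω, S2 ω)) Y2
      - CI p (fun ω => (U0 ω, U2 ω)) S1 S2 ∧
  H p (fun ω => (S1 ω, S2 ω)) < I2 p (fun ω => (K ω, U0 ω, U1 ω, S1 ω)) Y1
      + CI p (fun ω => (U2 ω, S2 ω)) Y2 (fun ω => (K ω, U0 ω))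
      - CI p (fun ω => (U1 ω, S1 ω)) (fun ω => (U2 ω, S2 ω)) (fun ω => (K ω, U0 ω)) ∧
  H p (fun ω => (S1 ω, S2 ω)) < CI p (fun ω => (U1 ω, S1 ω)) Y1 (fun ω => (K ω, U0 ω))
      + I2 p (fun ω => (K ω, U0 ω, U2 ω, S2 ω)) Y2
      - CI p (fun ω => (U1 ω, S1 ω)) (fun ω => (U2 ω, S2 ω)) (fun ω => (K ω, U0 ω)) ∧
  H p (fun ω => (S1 ω, S2 ω)) < I2 p (fun ω => (U0 ω, U1 ω, S1 ω)) Y1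
      + I2 p (fun ω => (U0 ω, U2 ω, S2 ω)) Y2
      - CI p (fun ω => (U1 ω, S1 ω)) (fun ω => (U2 ω, S2 ω)) (fun ω => (K ω, U0 ω))
      - I2 p (fun ω => (S1 ω, S2 ω)) (fun ω => (K ω, U0 ω))

end CSBC
/-- Entropy as an expectation: `H(X) = -E[log P_X(X)]`. -/
theorem entropy_eq_sum_omega {Ω A : Type*} [Fintype Ω] [Fintype A] (p : Ω → ℝ) (X : Ω → A) :
    H p X = -∑ ω, p ω * Real.log (CSBC.dist p X (X ω)) := by
  unfold H
  congr 1
  have h : ∀ a, CSBC.dist p X a * Real.log (CSBC.dist p X a)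
      = ∑ ω, if X ω = a then p ω * Real.log (CSBC.dist p X (X ω)) else 0 := by
    intro a
    conv_lhs => enter [1]; unfold CSBC.dist
    rw [Finset.sum_mul]
    refine Finset.sum_congr rfl fun ω _ => ?_
    split_ifs with hx
    · rw [hx]
    · simp
  simp_rw [h]
  rw [Finset.sum_comm]
  simp

/-- Entropy depends on a random variable only through the partition it induces on the support
of `p`; hence two variables that determine each other almost surely have equal entropy. -/
theorem entropy_congr_of_partition {Ω A B : Type*} [Fintype Ω] [Fintype A] [Fintype B]
    (p : Ω → ℝ) (X : Ω → A) (Y : Ω → B)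
    (h : ∀ ω ω', p ω ≠ 0 → p ω' ≠ 0 → (X ω = X ω' ↔ Y ω = Y ω')) :
    H p X = H p Y := by
  rw [entropy_eq_sum_omega, entropy_eq_sum_omega]
  congr 1
  refine Finset.sum_congr rfl fun ω _ => ?_
  by_cases hω : p ω = 0
  · simp [hω]
  · have hd : CSBC.dist p X (X ω) = CSBC.dist p Y (Y ω) := by
      unfold CSBC.dist
      refine Finset.sum_congr rfl fun ω' _ => ?_
      by_cases hω' : p ω' = 0
      · simp [hω']
      · simp only [h ω' ω hω' hω]
    rw [hd]

theorem I2_congr_of_partition {Ω A A' B B' : Type*} [Fintype Ω] [Fintype A] [Fintype A']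
    [Fintype B] [Fintype B'] (p : Ω → ℝ) {X : Ω → A} {X' : Ω → A'} {Y : Ω → B} {Y' : Ω → B'}
    (hX : ∀ ω ω', p ω ≠ 0 → p ω' ≠ 0 → (X ω = X ω' ↔ X' ω = X' ω'))
    (hY : ∀ ω ω', p ω ≠ 0 → p ω' ≠ 0 → (Y ω = Y ω' ↔ Y' ω = Y' ω')) :
    I2 p X Y = I2 p X' Y' := by
  unfold I2
  rw [entropy_congr_of_partition p X X' hX, entropy_congr_of_partition p Y Y' hY,
    entropy_congr_of_partition p (fun ω => (X ω, Y ω)) (fun ω => (X' ω, Y' ω))]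
  intro ω ω' h h'
  simp only [Prod.mk.injEq, hX ω ω' h h', hY ω ω' h h']

/-- In `I(X;Y|Z)` the variable `X` matters only through the pair `(X, Z)`, so it suffices to
compare the partitions induced by that pair and by `Z`. -/
theorem CI_congr_of_partition {Ω A A' B C C' : Type*} [Fintype Ω] [Fintype A] [Fintype A']
    [Fintype B] [Fintype C] [Fintype C'] (p : Ω → ℝ) {X : Ω → A} {X' : Ω → A'} (Y : Ω → B)
    {Z : Ω → C} {Z' : Ω → C'}
    (hXZ : ∀ ω ω', p ω ≠ 0 → p ω' ≠ 0 →
      (X ω = X ω' ∧ Z ω = Z ω' ↔ X' ω = X' ω' ∧ Z' ω = Z' ω'))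
    (hZ : ∀ ω ω', p ω ≠ 0 → p ω' ≠ 0 → (Z ω = Z ω' ↔ Z' ω = Z' ω')) :
    CI p X Y Z = CI p X' Y Z' := by
  unfold CI
  rw [entropy_congr_of_partition p Z Z' hZ,
    entropy_congr_of_partition p (fun ω => (X ω, Z ω)) (fun ω => (X' ω, Z' ω)),
    entropy_congr_of_partition p (fun ω => (Y ω, Z ω)) (fun ω => (Y ω, Z' ω)),
    entropy_congr_of_partition p (fun ω => (X ω, Y ω, Z ω)) (fun ω => (X' ω, Y ω, Z' ω))]
  all_goals
    intro ω ω' h h'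
    have h1 := hXZ ω ω' h h'
    have h2 := hZ ω ω' h h'
    simp only [Prod.mk.injEq]
    tauto

/-- With `K = f(S1) = g(S2)` a.s. and `Ũ0 := (U0, K)`, the listed
mutual-information identities hold, and consequently the five Minero–Kim
inequalities evaluated with `(Ũ0, U1, U2)` coincide with the five Han–Costa
inequalities evaluated with `(U0, U1, U2)` and common variable `K`. -/
theorem augmented_U0_identities
    {Ω A1 A2 B0 B1 B2 C1 C2 Kt : Type*}
    [Fintype Ω] [Fintype A1] [Fintype A2] [Fintype B0] [Fintype B1] [Fintype B2]
    [Fintype C1] [Fintype C2] [Fintype Kt]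
    (p : Ω → ℝ) (hp : IsPMF p)
    (S1 : Ω → A1) (S2 : Ω → A2) (U0 : Ω → B0) (U1 : Ω → B1) (U2 : Ω → B2)
    (Y1 : Ω → C1) (Y2 : Ω → C2) (K : Ω → Kt)
    (f : A1 → Kt) (g : A2 → Kt)
    (hf : ∀ ω, p ω ≠ 0 → K ω = f (S1 ω))
    (hg : ∀ ω, p ω ≠ 0 → K ω = g (S2 ω)) :
    -- (i)
    CI p (fun ω => ((U0 ω, K ω), U1 ω)) S2 S1
      = CI p (fun ω => (U0 ω, U1 ω)) S2 S1 ∧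
    -- (ii)
    CI p (fun ω => ((U0 ω, K ω), U2 ω)) S1 S2
      = CI p (fun ω => (U0 ω, U2 ω)) S1 S2 ∧
    -- (iii)
    I2 p (fun ω => ((U0 ω, K ω), U1 ω, S1 ω)) Y1
      = I2 p (fun ω => (K ω, U0 ω, U1 ω, S1 ω)) Y1 ∧
    -- (iv)
    CI p (fun ω => (U2 ω, S2 ω)) Y2 (fun ω => (U0 ω, K ω))
      = CI p (fun ω => (U2 ω, S2 ω)) Y2 (fun ω => (K ω, U0 ω)) ∧
    -- (v)
    CI p (fun ω => (U1 ω, S1 ω)) Y1 (fun ω => (U0 ω, K ω))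
      = CI p (fun ω => (U1 ω, S1 ω)) Y1 (fun ω => (K ω, U0 ω)) ∧
    -- (vi)
    CI p (fun ω => (U1 ω, S1 ω)) (fun ω => (U2 ω, S2 ω)) (fun ω => (U0 ω, K ω))
      = CI p (fun ω => (U1 ω, S1 ω)) (fun ω => (U2 ω, S2 ω)) (fun ω => (K ω, U0 ω)) ∧
    -- (vii)
    I2 p (fun ω => (S1 ω, S2 ω)) (fun ω => (U0 ω, K ω))
      = I2 p (fun ω => (S1 ω, S2 ω)) (fun ω => (K ω, U0 ω)) ∧
    -- Consequently:
    (MKfive p S1 S2 (fun ω => (U0 ω, K ω)) U1 U2 Y1 Y2 ↔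
      HCfive p S1 S2 U0 U1 U2 Y1 Y2 K) := by
  have drop1 : ∀ ω ω', p ω ≠ 0 → p ω' ≠ 0 → S1 ω = S1 ω' → K ω = K ω' := by
    intro ω ω' h h' e
    rw [hf ω h, hf ω' h', e]
  have drop2 : ∀ ω ω', p ω ≠ 0 → p ω' ≠ 0 → S2 ω = S2 ω' → K ω = K ω' := by
    intro ω ω' h h' e
    rw [hg ω h, hg ω' h', e]
  have i1 : CI p (fun ω => ((U0 ω, K ω), U1 ω)) S2 S1
      = CI p (fun ω => (U0 ω, U1 ω)) S2 S1 := by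
    refine CI_congr_of_partition p _ ?_ ?_
    · exact fun ω ω' h h' => by
        have := drop1 ω ω' h h'
        simp only [Prod.mk.injEq]; tauto
    · exact fun _ _ _ _ => Iff.rfl
  have i2 : CI p (fun ω => ((U0 ω, K ω), U2 ω)) S1 S2
      = CI p (fun ω => (U0 ω, U2 ω)) S1 S2 := by
    refine CI_congr_of_partition p _ ?_ ?_
    · exact fun ω ω' h h' => by
        have := drop2 ω ω' h h'
        simp only [Prod.mk.injEq]; tauto
    · exact fun _ _ _ _ => Iff.rfl
  have i3 : I2 p (fun ω => ((U0 ω, K ω), U1 ω, S1 ω)) Y1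
      = I2 p (fun ω => (K ω, U0 ω, U1 ω, S1 ω)) Y1 := by
    refine I2_congr_of_partition p ?_ ?_
    · exact fun ω ω' _ _ => by simp only [Prod.mk.injEq]; tauto
    · exact fun _ _ _ _ => Iff.rfl
  have i4 : CI p (fun ω => (U2 ω, S2 ω)) Y2 (fun ω => (U0 ω, K ω))
      = CI p (fun ω => (U2 ω, S2 ω)) Y2 (fun ω => (K ω, U0 ω)) := by
    refine CI_congr_of_partition p _ ?_ ?_
    · exact fun ω ω' _ _ => by simp only [Prod.mk.injEq]; tauto
    · exact fun ω ω' _ _ => by simp only [Prod.mk.injEq]; tauto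
  have i5 : CI p (fun ω => (U1 ω, S1 ω)) Y1 (fun ω => (U0 ω, K ω))
      = CI p (fun ω => (U1 ω, S1 ω)) Y1 (fun ω => (K ω, U0 ω)) := by
    refine CI_congr_of_partition p _ ?_ ?_
    · exact fun ω ω' _ _ => by simp only [Prod.mk.injEq]; tauto
    · exact fun ω ω' _ _ => by simp only [Prod.mk.injEq]; tauto
  have i6 : CI p (fun ω => (U1 ω, S1 ω)) (fun ω => (U2 ω, S2 ω)) (fun ω => (U0 ω, K ω))
      = CI p (fun ω => (U1 ω, S1 ω)) (fun ω => (U2 ω, S2 ω)) (fun ω => (K ω, U0 ω)) := by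
    refine CI_congr_of_partition p _ ?_ ?_
    · exact fun ω ω' _ _ => by simp only [Prod.mk.injEq]; tauto
    · exact fun ω ω' _ _ => by simp only [Prod.mk.injEq]; tauto
  have i7 : I2 p (fun ω => (S1 ω, S2 ω)) (fun ω => (U0 ω, K ω))
      = I2 p (fun ω => (S1 ω, S2 ω)) (fun ω => (K ω, U0 ω)) := by
    refine I2_congr_of_partition p ?_ ?_
    · exact fun _ _ _ _ => Iff.rfl
    · exact fun ω ω' _ _ => by simp only [Prod.mk.injEq]; tauto
  have j1 : I2 p (fun ω => (K ω, U0 ω, U1 ω, S1 ω)) Y1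
      = I2 p (fun ω => (U0 ω, U1 ω, S1 ω)) Y1 := by
    refine I2_congr_of_partition p ?_ ?_
    · exact fun ω ω' h h' => by
        have := drop1 ω ω' h h'
        simp only [Prod.mk.injEq]; tauto
    · exact fun _ _ _ _ => Iff.rfl
  have j2 : I2 p (fun ω => (K ω, U0 ω, U2 ω, S2 ω)) Y2
      = I2 p (fun ω => (U0 ω, U2 ω, S2 ω)) Y2 := by
    refine I2_congr_of_partition p ?_ ?_
    · exact fun ω ω' h h' => by
        have := drop2 ω ω' h h'
        simp only [Prod.mk.injEq]; tauto
    · exact fun _ _ _ _ => Iff.rfl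
  have j3 : I2 p (fun ω => ((U0 ω, K ω), U2 ω, S2 ω)) Y2
      = I2 p (fun ω => (U0 ω, U2 ω, S2 ω)) Y2 := by
    refine I2_congr_of_partition p ?_ ?_
    · exact fun ω ω' h h' => by
        have := drop2 ω ω' h h'
        simp only [Prod.mk.injEq]; tauto
    · exact fun _ _ _ _ => Iff.rfl
  refine ⟨i1, i2, i3, i4, i5, i6, i7, ?_⟩
  unfold MKfive HCfive
  simp only [i1, i2, i3, i4, i5, i6, i7, j1, j2, j3]
end
end

section
/- Let W0, W1, W2 be mutually independent finitely-valued random variables with entropies R0 = H(W0), R1 = H(W1), R2 = H(W2), and set S1 = (W0,W1), S2 = (W0,W2). Let (U0,U1,U2,Y1,Y2) be finitely-valued random variables jointly independent of (W0,W1,W2), and set Ũ0 = (U0,W0). Then the five Theorem-2 inequalities evaluated with auxiliary triple (Ũ0,U1,U2), namely H(S1) < I(Ũ0,U1,S1;Y1) − I(Ũ0,U1;S2|S1); H(S2) < I(Ũ0,U2,S2;Y2) − I(Ũ0,U2;S1|S2); H(S1,S2) < I(Ũ0,U1,S1;Y1) + I(U2,S2;Y2|Ũ0) − I(U1,S1;U2,S2|Ũ0);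 H(S1,S2) < I(U1,S1;Y1|Ũ0) + I(Ũ0,U2,S2;Y2) − I(U1,S1;U2,S2|Ũ0); H(S1,S2) < I(Ũ0,U1,S1;Y1) + I(Ũ0,U2,S2;Y2) − I(U1,S1;U2,S2|Ũ0) − I(S1,S2;Ũ0), hold if and only if Marton's five inequalities hold: R0 + R1 < I(U0,U1;Y1); R0 + R2 < I(U0,U2;Y2); R0 + R1 + R2 < I(U0,U1;Y1) + I(U2;Y2|U0) − I(U1;U2|U0); R0 + R1 + R2 < I(U1;Y1|U0) + I(U0,U2;Y2) − I(U1;U2|U0); 2R0 + R1 + R2 < I(U0,U1;Y1) + I(U0,U2;Y2) − I(U1;U2|U0). -/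
/-!
Everything reduces to additivity of entropy over independent variables. Two random variables with
the same kernel (the same partition of `Ω`) have the same entropy (`H_congr`), so every entropy
occurring in the five source-coding inequalities is that of a pair `(f(U), g(W))`, where
`U = (U0,U1,U2,Y1,Y2)` and `W = (W0,W1,W2)`, however often `W0` is repeated inside the tuples.
Independence of `U` and `W` splits it as `H(f(U)) + H(g(W))` (`Indep.H_split`).

After splitting, the `W`-contributions cancel in `I(Ũ0,U1,S1;Y1)` and in `I(U2,S2;Y2|Ũ0)`, which
become `I(U0,U1;Y1)` and `I(U2;Y2|U0)`; likewise `I(Ũ0,U1;S2|S1) = 0` and `I(S1,S2;Ũ0) = R0`.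
Mutual independence of the `Wi` turns `I(U1,S1;U2,S2|Ũ0)` into `I(U1;U2|U0)`, because `W1` and `W2`
are conditionally independent given `W0`, and gives `H(S1) = R0 + R1`, `H(S2) = R0 + R2` and
`H(S1,S2) = R0 + R1 + R2`. The two systems of inequalities then agree line by line.
-/

open Real Filter

attribute [local instance] Classical.propDecidable

noncomputable section

open CSBC
namespace CSBC

/-! ### Entropy, kernels and independence -/

variable {Ω A B A' B' G : Type*} [Fintype Ω] [Fintype A] [Fintype B] [Fintype A'] [Fintype B']
  [Fintype G]

/-- Entropy as the expectation of the self-information `-log P(X = X(ω))`. -/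
lemma H_eq_sum (p : Ω → ℝ) (X : Ω → A) :
    H p X = -∑ ω, p ω * Real.log (dist p X (X ω)) := by
  unfold H
  congr 1
  have h : ∀ a, dist p X a * Real.log (dist p X a)
      = ∑ ω, if X ω = a then p ω * Real.log (dist p X (X ω)) else 0 := by
    intro a
    conv_lhs => rw [dist, Finset.sum_mul]
    refine Finset.sum_congr rfl fun ω _ => ?_
    split_ifs with h
    · rw [h]; rfl
    · simp
  simp_rw [h]
  rw [Finset.sum_comm]
  simp

/-- Entropy depends only on the partition of `Ω` induced by the random variable. -/
lemma H_congr (p : Ω → ℝ) (X : Ω → A) (Y : Ω → B)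
    (h : ∀ ω ω', X ω = X ω' ↔ Y ω = Y ω') : H p X = H p Y := by
  rw [H_eq_sum, H_eq_sum]
  have : ∀ ω, dist p X (X ω) = dist p Y (Y ω) := by
    intro ω
    simp only [dist, h]
  simp_rw [this]

lemma dist_comp (p : Ω → ℝ) (X : Ω → A) (f : A → B) (b : B) :
    dist p (fun ω => f (X ω)) b = ∑ a, if f a = b then dist p X a else 0 := by
  have h : ∀ a, (if f a = b then dist p X a else 0)
      = ∑ ω, if X ω = a then (if f (X ω) = b then p ω else 0) else 0 := by
    intro a
    by_cases hf : f a = b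
    · rw [if_pos hf, dist]
      refine Finset.sum_congr rfl fun ω _ => ?_
      split_ifs <;> simp_all
    · rw [if_neg hf]
      symm
      refine Finset.sum_eq_zero fun ω _ => ?_
      split_ifs <;> simp_all
  simp_rw [h]
  rw [Finset.sum_comm]
  simp [dist]

lemma sum_dist {p : Ω → ℝ} (hp : IsPMF p) (X : Ω → A) : ∑ a, dist p X a = 1 := by
  unfold dist
  rw [Finset.sum_comm]
  simpa using hp.2

lemma dist_pos {p : Ω → ℝ} (hp : IsPMF p) (X : Ω → A) {ω : Ω} (hω : p ω ≠ 0) :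
    0 < dist p X (X ω) := by
  have h1 : 0 < p ω := lt_of_le_of_ne (hp.1 ω) (Ne.symm hω)
  have h2 := Finset.single_le_sum (f := fun ω' => if X ω' = X ω then p ω' else 0)
    (s := Finset.univ) (fun i _ => by split_ifs; exacts [hp.1 i, le_rfl])
    (Finset.mem_univ ω)
  simp only [if_true] at h2
  exact h1.trans_le h2

/-- Independence of two finitely-valued random variables: the joint pmf is the product of the
marginals. -/
def Indep (p : Ω → ℝ) (X : Ω → A) (Y : Ω → B) : Prop :=
  ∀ a b, dist p (fun ω => (X ω, Y ω)) (a, b) = dist p X a * dist p Y b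

lemma Indep.comp {p : Ω → ℝ} {X : Ω → A} {Y : Ω → B} (h : Indep p X Y)
    (f : A → A') (g : B → B') : Indep p (fun ω => f (X ω)) (fun ω => g (Y ω)) := by
  intro a b
  have h1 := dist_comp p (fun ω => (X ω, Y ω)) (fun z : A × B => (f z.1, g z.2)) (a, b)
  rw [h1, dist_comp p X f, dist_comp p Y g, Finset.sum_mul_sum, Fintype.sum_prod_type]
  refine Finset.sum_congr rfl fun x _ => Finset.sum_congr rfl fun y _ => ?_
  rw [h x y]
  by_cases hx : f x = a <;> by_cases hy : g y = b <;> simp [hx, hy]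

lemma Indep.H_pair {p : Ω → ℝ} (hp : IsPMF p) {X : Ω → A} {Y : Ω → B} (h : Indep p X Y) :
    H p (fun ω => (X ω, Y ω)) = H p X + H p Y := by
  rw [H_eq_sum, H_eq_sum p X, H_eq_sum p Y, ← neg_add, ← Finset.sum_add_distrib]
  congr 1
  refine Finset.sum_congr rfl fun ω _ => ?_
  by_cases hω : p ω = 0
  · simp [hω]
  · rw [h, Real.log_mul (dist_pos hp X hω).ne' (dist_pos hp Y hω).ne', mul_add]

/-- If `X` and `Y` are independent and `Z` carries the same information as `(f(X), g(Y))`, then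
its entropy is `H(f(X)) + H(g(Y))`. -/
lemma Indep.H_split {p : Ω → ℝ} (hp : IsPMF p) {X : Ω → A} {Y : Ω → B} (h : Indep p X Y)
    (f : A → A') (g : B → B') (Z : Ω → G)
    (hZ : ∀ ω ω', Z ω = Z ω' ↔ f (X ω) = f (X ω') ∧ g (Y ω) = g (Y ω')) :
    H p Z = H p (fun ω => f (X ω)) + H p (fun ω => g (Y ω)) := by
  rw [← (h.comp f g).H_pair hp]
  exact H_congr p _ _ fun ω ω' => by simp [hZ]

/-! ### The information quantities of the specialization -/

section Quantities

variable {D0 D1 D2 B0 B1 B2 C : Type*} [Fintype D0] [Fintype D1] [Fintype D2]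
  [Fintype B0] [Fintype B1] [Fintype B2] [Fintype C]

/-- `I(Ũ0,U1,S1;Y) = I(U0,U1;Y)`. -/
lemma I2_aux {p : Ω → ℝ} (hp : IsPMF p) {W0 : Ω → D0} {W1 : Ω → D1}
    {U0 : Ω → B0} {U1 : Ω → B1} {Y : Ω → C}
    (h : Indep p (fun ω => (U0 ω, U1 ω, Y ω)) (fun ω => (W0 ω, W1 ω))) :
    I2 p (fun ω => ((U0 ω, W0 ω), U1 ω, (W0 ω, W1 ω))) Y
      = I2 p (fun ω => (U0 ω, U1 ω)) Y := by
  have h1 := h.H_split hp (fun u => (u.1, u.2.1)) (fun w => w)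
    (fun ω => ((U0 ω, W0 ω), U1 ω, (W0 ω, W1 ω))) (fun _ _ => by simp; tauto)
  have h2 := h.H_split hp (fun u => ((u.1, u.2.1), u.2.2)) (fun w => w)
    (fun ω => (((U0 ω, W0 ω), U1 ω, (W0 ω, W1 ω)), Y ω)) (fun _ _ => by simp; tauto)
  simp only [I2]
  dsimp only at h1 h2
  linarith

/-- `I(Ũ0,U1;S2|S1) = 0`. -/
lemma CI_aux_zero {p : Ω → ℝ} (hp : IsPMF p) {W0 : Ω → D0} {W1 : Ω → D1} {W2 : Ω → D2}
    {U0 : Ω → B0} {U1 : Ω → B1}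
    (h : Indep p (fun ω => (U0 ω, U1 ω)) (fun ω => (W0 ω, W1 ω, W2 ω))) :
    CI p (fun ω => ((U0 ω, W0 ω), U1 ω)) (fun ω => (W0 ω, W2 ω)) (fun ω => (W0 ω, W1 ω)) = 0 := by
  have h1 := h.H_split hp (fun u => u) (fun w => (w.1, w.2.1))
    (fun ω => (((U0 ω, W0 ω), U1 ω), (W0 ω, W1 ω))) (fun _ _ => by simp; tauto)
  have h2 := h.H_split hp (fun u => u) (fun w => ((w.1, w.2.2), (w.1, w.2.1)))
    (fun ω => (((U0 ω, W0 ω), U1 ω), (W0 ω, W2 ω), (W0 ω, W1 ω))) (fun _ _ => by simp; tauto)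
  simp only [CI]
  dsimp only at h1 h2
  linarith

/-- `I(U2,S2;Y|Ũ0) = I(U2;Y|U0)`. -/
lemma CI_aux_output {p : Ω → ℝ} (hp : IsPMF p) {W0 : Ω → D0} {W2 : Ω → D2}
    {U0 : Ω → B0} {U2 : Ω → B2} {Y : Ω → C}
    (h : Indep p (fun ω => (U0 ω, U2 ω, Y ω)) (fun ω => (W0 ω, W2 ω))) :
    CI p (fun ω => (U2 ω, (W0 ω, W2 ω))) Y (fun ω => (U0 ω, W0 ω)) = CI p U2 Y U0 := by
  have h1 := h.H_split hp (fun u => (u.2.1, u.1)) (fun w => w)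
    (fun ω => ((U2 ω, (W0 ω, W2 ω)), (U0 ω, W0 ω))) (fun _ _ => by simp; tauto)
  have h2 := h.H_split hp (fun u => (u.2.2, u.1)) (fun w => w.1)
    (fun ω => (Y ω, (U0 ω, W0 ω))) (fun _ _ => by simp; tauto)
  have h3 := h.H_split hp (fun u => (u.2.1, u.2.2, u.1)) (fun w => w)
    (fun ω => ((U2 ω, (W0 ω, W2 ω)), Y ω, (U0 ω, W0 ω))) (fun _ _ => by simp; tauto)
  have h4 := h.H_split hp (fun u => u.1) (fun w => w.1)
    (fun ω => (U0 ω, W0 ω)) (fun _ _ => by simp)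
  simp only [CI]
  dsimp only at h1 h2 h3 h4
  linarith

/-- `I(U1,S1;U2,S2|Ũ0) = I(U1;U2|U0)`; the hypothesis `hW` says `I(W1;W2|W0) = 0`. -/
lemma CI_aux_pair {p : Ω → ℝ} (hp : IsPMF p) {W0 : Ω → D0} {W1 : Ω → D1} {W2 : Ω → D2}
    {U0 : Ω → B0} {U1 : Ω → B1} {U2 : Ω → B2}
    (h : Indep p (fun ω => (U0 ω, U1 ω, U2 ω)) (fun ω => (W0 ω, W1 ω, W2 ω)))
    (hW : H p (fun ω => (W0 ω, W1 ω)) + H p (fun ω => (W0 ω, W2 ω))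
      = H p (fun ω => (W0 ω, W1 ω, W2 ω)) + H p W0) :
    CI p (fun ω => (U1 ω, (W0 ω, W1 ω))) (fun ω => (U2 ω, (W0 ω, W2 ω))) (fun ω => (U0 ω, W0 ω))
      = CI p U1 U2 U0 := by
  have h1 := h.H_split hp (fun u => (u.2.1, u.1)) (fun w => (w.1, w.2.1))
    (fun ω => ((U1 ω, (W0 ω, W1 ω)), (U0 ω, W0 ω))) (fun _ _ => by simp; tauto)
  have h2 := h.H_split hp (fun u => (u.2.2, u.1)) (fun w => (w.1, w.2.2))
    (fun ω => ((U2 ω, (W0 ω, W2 ω)), (U0 ω, W0 ω))) (fun _ _ => by simp; tauto)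
  have h3 := h.H_split hp (fun u => (u.2.1, u.2.2, u.1)) (fun w => w)
    (fun ω => ((U1 ω, (W0 ω, W1 ω)), (U2 ω, (W0 ω, W2 ω)), (U0 ω, W0 ω)))
    (fun _ _ => by simp; tauto)
  have h4 := h.H_split hp (fun u => u.1) (fun w => w.1)
    (fun ω => (U0 ω, W0 ω)) (fun _ _ => by simp)
  simp only [CI]
  dsimp only at h1 h2 h3 h4
  linarith

/-- `I(S1,S2;Ũ0) = H(W0)`: the common part is all that the sources share with `Ũ0`. -/
lemma I2_sources_aux {p : Ω → ℝ} (hp : IsPMF p) {W0 : Ω → D0} {W1 : Ω → D1} {W2 : Ω → D2}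
    {U0 : Ω → B0} (h : Indep p U0 (fun ω => (W0 ω, W1 ω, W2 ω))) :
    I2 p (fun ω => ((W0 ω, W1 ω), (W0 ω, W2 ω))) (fun ω => (U0 ω, W0 ω)) = H p W0 := by
  have h1 := h.H_split hp (fun u => u) (fun w => w.1)
    (fun ω => (U0 ω, W0 ω)) (fun _ _ => by simp)
  have h2 := h.H_split hp (fun u => u) (fun w => ((w.1, w.2.1), (w.1, w.2.2)))
    (fun ω => (((W0 ω, W1 ω), (W0 ω, W2 ω)), (U0 ω, W0 ω))) (fun _ _ => by simp; tauto)
  simp only [I2]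
  dsimp only at h1 h2
  linarith

/-- Three variables with product pmf: the last two are independent, and jointly independent of the
first. -/
lemma indep_of_triple {p : Ω → ℝ} (hp : IsPMF p) {W0 : Ω → D0} {W1 : Ω → D1} {W2 : Ω → D2}
    (h : ∀ a b c, dist p (fun ω => (W0 ω, W1 ω, W2 ω)) (a, b, c)
      = dist p W0 a * dist p W1 b * dist p W2 c) :
    Indep p W1 W2 ∧ Indep p W0 (fun ω => (W1 ω, W2 ω)) := by
  have h12 : Indep p W1 W2 := by
    intro b c
    have e := dist_comp p (fun ω => (W0 ω, W1 ω, W2 ω)) (fun w => w.2) (b, c)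
    dsimp only at e
    rw [e, Fintype.sum_prod_type]
    simp only [Finset.sum_ite_eq', Finset.mem_univ, if_true, h]
    simp_rw [mul_assoc]
    rw [← Finset.sum_mul, sum_dist hp, one_mul]
  refine ⟨h12, fun a bc => ?_⟩
  obtain ⟨b, c⟩ := bc
  rw [h12 b c, h, mul_assoc]

end Quantities

end CSBC

/-- specialization to independent message sources: Marton's
inner bound.  With `S1 = (W0,W1)`, `S2 = (W0,W2)` for mutually independent
`W0, W1, W2` of entropies `R0, R1, R2`, auxiliaries `(U0,U1,U2,Y1,Y2)` jointly
independent of `(W0,W1,W2)`, and `Ũ0 = (U0,W0)`, the five Theorem-2 inequalities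
for `(Ũ0,U1,U2)` hold iff Marton's five inequalities hold. -/
theorem marton_specialization
    {Ω D0 D1 D2 B0 B1 B2 C1 C2 : Type*}
    [Fintype Ω] [Fintype D0] [Fintype D1] [Fintype D2] [Fintype B0] [Fintype B1]
    [Fintype B2] [Fintype C1] [Fintype C2]
    (p : Ω → ℝ) (hp : IsPMF p)
    (W0 : Ω → D0) (W1 : Ω → D1) (W2 : Ω → D2)
    (U0 : Ω → B0) (U1 : Ω → B1) (U2 : Ω → B2) (Y1 : Ω → C1) (Y2 : Ω → C2)
    (hWindep : ∀ (a : D0) (b : D1) (c : D2),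
      dist p (fun ω => (W0 ω, W1 ω, W2 ω)) (a, b, c)
        = dist p W0 a * dist p W1 b * dist p W2 c)
    (hindep : ∀ (u : B0 × B1 × B2 × C1 × C2) (w : D0 × D1 × D2),
      dist p (fun ω => ((U0 ω, U1 ω, U2 ω, Y1 ω, Y2 ω), W0 ω, W1 ω, W2 ω)) (u, w)
        = dist p (fun ω => (U0 ω, U1 ω, U2 ω, Y1 ω, Y2 ω)) u *
          dist p (fun ω => (W0 ω, W1 ω, W2 ω)) w)
    (R0 R1 R2 : ℝ) (hR0 : R0 = H p W0) (hR1 : R1 = H p W1) (hR2 : R2 = H p W2) :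
    MKfive p (fun ω => (W0 ω, W1 ω)) (fun ω => (W0 ω, W2 ω))
        (fun ω => (U0 ω, W0 ω)) U1 U2 Y1 Y2 ↔
      (R0 + R1 < I2 p (fun ω => (U0 ω, U1 ω)) Y1 ∧
       R0 + R2 < I2 p (fun ω => (U0 ω, U2 ω)) Y2 ∧
       R0 + R1 + R2 < I2 p (fun ω => (U0 ω, U1 ω)) Y1 + CI p U2 Y2 U0 - CI p U1 U2 U0 ∧
       R0 + R1 + R2 < CI p U1 Y1 U0 + I2 p (fun ω => (U0 ω, U2 ω)) Y2 - CI p U1 U2 U0 ∧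
       2 * R0 + R1 + R2 < I2 p (fun ω => (U0 ω, U1 ω)) Y1 + I2 p (fun ω => (U0 ω, U2 ω)) Y2
          - CI p U1 U2 U0) := by
  obtain ⟨h12, h0⟩ := indep_of_triple hp hWindep
  have hUW : Indep p (fun ω => (U0 ω, U1 ω, U2 ω, Y1 ω, Y2 ω))
      (fun ω => (W0 ω, W1 ω, W2 ω)) := hindep
  have e12 := h12.H_pair hp
  have e012 := h0.H_pair hp
  have e01 : H p (fun ω => (W0 ω, W1 ω)) = H p W0 + H p W1 :=
    (h0.comp (fun a => a) (fun w => w.1)).H_pair hp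
  have e02 : H p (fun ω => (W0 ω, W2 ω)) = H p W0 + H p W2 :=
    (h0.comp (fun a => a) (fun w => w.2)).H_pair hp
  have eS : H p (fun ω => ((W0 ω, W1 ω), (W0 ω, W2 ω))) = H p (fun ω => (W0 ω, W1 ω, W2 ω)) :=
    H_congr p _ _ fun _ _ => by simp; tauto
  have i1 := I2_aux hp (hUW.comp (fun u => (u.1, u.2.1, u.2.2.2.1)) (fun w => (w.1, w.2.1)))
  have i2 := I2_aux hp (hUW.comp (fun u => (u.1, u.2.2.1, u.2.2.2.2)) (fun w => (w.1, w.2.2)))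
  have z1 := CI_aux_zero hp (hUW.comp (fun u => (u.1, u.2.1)) (fun w => (w.1, w.2.1, w.2.2)))
  have z2 := CI_aux_zero hp (hUW.comp (fun u => (u.1, u.2.2.1)) (fun w => (w.1, w.2.2, w.2.1)))
  have c1 := CI_aux_output hp
    (hUW.comp (fun u => (u.1, u.2.1, u.2.2.2.1)) (fun w => (w.1, w.2.1)))
  have c2 := CI_aux_output hp
    (hUW.comp (fun u => (u.1, u.2.2.1, u.2.2.2.2)) (fun w => (w.1, w.2.2)))
  have c12 := CI_aux_pair hp
    (hUW.comp (fun u => (u.1, u.2.1, u.2.2.1)) (fun w => (w.1, w.2.1, w.2.2)))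
    (by dsimp only; linarith)
  have s := I2_sources_aux hp (hUW.comp (fun u => u.1) (fun w => (w.1, w.2.1, w.2.2)))
  dsimp only at i1 i2 z1 z2 c1 c2 c12 s
  unfold MKfive
  simp only [i1, i2, z1, z2, c1, c2, c12, s, eS, e012, e12, e01, e02]
  subst hR0 hR1 hR2
  constructor
  · rintro ⟨h1, h2, h3, h4, h5⟩
    refine ⟨?_, ?_, ?_, ?_, ?_⟩ <;> linarith
  · rintro ⟨h1, h2, h3, h4, h5⟩
    refine ⟨?_, ?_, ?_, ?_, ?_⟩ <;> linarith
end
end
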